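/- arXiv:1802.08180 — 5 statements merged into one kernel-verified Lean document; each statement's English description precedes it below -/
import Mathlib

section
/- Let (V, K, η) be a para-Hermitian vector space with projections P±, let B : V → V be an η-skew linear map with image in E₋ and vanishing on E₋, and let b₊ be the bilinear form on E₊ given by b₊(x, y) := η(B x, y). Define ρ₊ : V → E₊ × (E₊)* by ρ₊(X) := (P₊X, η(P₋X, ·)|_{E₊}), and define the b-field transformation e^{b₊} : E₊ × (E₊)* → E₊ × (E₊)* by e^{b₊}(x, ξ) := (x, ξ + b₊(x, ·)). Then ρ₊ ∘ (id + B) = e^{b₊} ∘ ρ₊, i.e. the B-transformation of V corresponds under ρ₊ to the b-field transformation of E₊ × (E₊)*. -/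
open Module

/-!
Since `B` kills `E₋` and takes values in `E₋`, we have `B X = B (P₊X) ∈ E₋`. Hence `id + B` leaves
the `E₊`-component of `X` unchanged and adds `B (P₊X)` to its `E₋`-component, and pairing the
latter with `E₊` through `η` turns this shift into `b₊(P₊X, ·)`.
-/

section Projection

variable {R V W : Type*} [Ring R] [AddCommGroup V] [Module R V] [AddCommGroup W] [Module R W]
  {p q : Submodule R V}

lemma projection_add_of_mem_right (h : IsCompl p q) (x : V) {z : V} (hz : z ∈ q) :
    p.projection q h (x + z) = p.projection q h x := by
  rw [map_add, Submodule.projection_apply_of_mem_right h hz, add_zero]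

lemma map_projection_of_eq_zero_right (h : IsCompl p q) {f : V →ₗ[R] W}
    (hker : ∀ z ∈ q, f z = 0) (x : V) : f (p.projection q h x) = f x := by
  rw [eq_comm, ← sub_eq_zero, ← map_sub]
  exact hker _ (Submodule.sub_projection_mem h x)

lemma projection_symm_add_apply (h : IsCompl p q) {B : End R V} (hrange : ∀ x, B x ∈ q)
    (hker : ∀ z ∈ q, B z = 0) (x : V) :
    q.projection p h.symm (x + B x) = q.projection p h.symm x + B (p.projection q h x) := by
  rw [map_add, Submodule.projection_apply_of_mem_left h.symm (hrange x),
    map_projection_of_eq_zero_right h hker]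

end Projection

section Splitting

variable {R V : Type*} [CommRing R] [AddCommGroup V] [Module R V] {p q : Submodule R V}

/-- The map `ρ₊ : X ↦ (P₊X, η(P₋X, ·)|_{E₊})` of a splitting `V = p ⊕ q`, where `p` plays the role
of `E₊` and `q` that of `E₋`. It compares the `B`-transformations of `V` with the b-field
transformations of `E₊ × (E₊)*`. -/
noncomputable def splittingMap (h : IsCompl p q) (η : LinearMap.BilinForm R V) :
    V →ₗ[R] p × Dual R p :=
  (p.projectionOnto q h).prod (η.domRestrict₂ p ∘ₗ q.projection p h.symm)

/-- The b-field transformation `e^b : (x, ξ) ↦ (x, ξ + b(x, ·))` of `M × M*`, where `M` stands for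
`E₊`; it is bundled as a linear automorphism. -/
def bFieldTransformation {M : Type*} [AddCommGroup M] [Module R M] (b : LinearMap.BilinForm R M) :
    (M × Dual R M) ≃ₗ[R] M × Dual R M :=
  (LinearEquiv.refl R M).skewProd (LinearEquiv.refl R (Dual R M)) b

theorem stmt11_general (h : IsCompl p q) (η : LinearMap.BilinForm R V) {B : End R V}
    (hrange : ∀ x, B x ∈ q) (hker : ∀ z ∈ q, B z = 0) :
    splittingMap h η ∘ₗ (LinearMap.id + B) =
      bFieldTransformation ((η.compLeft B).restrict p) ∘ₗ splittingMap h η := by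
  refine LinearMap.ext fun x => Prod.ext (Subtype.ext ?_) (LinearMap.ext fun y => ?_)
  · exact projection_add_of_mem_right h x (hrange x)
  · calc η (q.projection p h.symm (x + B x)) y
        = η (q.projection p h.symm x + B (p.projection q h x)) y := by
          rw [projection_symm_add_apply h hrange hker]
      _ = η (q.projection p h.symm x) y + η (B (p.projection q h x)) y := by
          rw [map_add, LinearMap.add_apply]

end Splitting

lemma half_add_add_half_sub (R : Type*) {V : Type*} [Ring R] [Invertible (2 : R)]
    [AddCommGroup V] [Module R V] (x y : V) :
    ⅟(2 : R) • (x + y) + ⅟(2 : R) • (x - y) = x := by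
  rw [← smul_add, add_add_sub_cancel, ← two_smul R x, invOf_smul_smul]

section Involution

variable {R V : Type*} [CommRing R] [Invertible (2 : R)] [AddCommGroup V] [Module R V] {K : End R V}

lemma half_add_mem_eigenspace_one (hK : Function.Involutive K) (x : V) :
    ⅟(2 : R) • (x + K x) ∈ End.eigenspace K 1 := by
  rw [End.mem_eigenspace_iff, map_smul, map_add, hK, one_smul, add_comm]

lemma half_sub_mem_eigenspace_neg_one (hK : Function.Involutive K) (x : V) :
    ⅟(2 : R) • (x - K x) ∈ End.eigenspace K (-1) := by
  rw [End.mem_eigenspace_iff, map_smul, map_sub, hK, neg_one_smul, ← smul_neg, neg_sub]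

lemma isCompl_eigenspace_one_neg_one (hK : Function.Involutive K) :
    IsCompl (End.eigenspace K 1) (End.eigenspace K (-1)) where
  disjoint := by
    refine Submodule.disjoint_def.mpr fun x hpos hneg => ?_
    rw [End.mem_eigenspace_iff, one_smul] at hpos
    rw [End.mem_eigenspace_iff, neg_one_smul] at hneg
    calc x = ⅟(2 : R) • (x + K x) + ⅟(2 : R) • (x - K x) := (half_add_add_half_sub R x (K x)).symm
      _ = ⅟(2 : R) • (x + -x) + ⅟(2 : R) • (x - x) := by nth_rw 1 [hneg]; rw [hpos]
      _ = 0 := by rw [add_neg_cancel, sub_self, smul_zero, add_zero]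
  codisjoint := Submodule.codisjoint_iff_exists_add_eq.mpr fun x =>
    ⟨_, _, half_add_mem_eigenspace_one hK x, half_sub_mem_eigenspace_neg_one hK x,
      half_add_add_half_sub R x (K x)⟩

lemma projection_eigenspace_one_apply (hK : Function.Involutive K) (x : V) :
    (End.eigenspace K 1).projection _ (isCompl_eigenspace_one_neg_one hK) x =
      ⅟(2 : R) • (x + K x) := by
  conv_lhs => rw [← half_add_add_half_sub R x (K x)]
  rw [map_add, Submodule.projection_apply_of_mem_left _ (half_add_mem_eigenspace_one hK x),
    Submodule.projection_apply_of_mem_right _ (half_sub_mem_eigenspace_neg_one hK x), add_zero]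

lemma projection_eigenspace_neg_one_apply (hK : Function.Involutive K) (x : V) :
    (End.eigenspace K (-1)).projection _ (isCompl_eigenspace_one_neg_one hK).symm x =
      ⅟(2 : R) • (x - K x) := by
  rw [Submodule.projection_eq_self_sub_projection (isCompl_eigenspace_one_neg_one hK),
    projection_eigenspace_one_apply hK, sub_eq_iff_eq_add', half_add_add_half_sub]

lemma splittingMap_eq_bFieldTransformation_iff (hK : Function.Involutive K)
    (η b : LinearMap.BilinForm R V) (x x' : V) :
    splittingMap (isCompl_eigenspace_one_neg_one hK) η x' =
        bFieldTransformation (b.restrict (End.eigenspace K 1))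
          (splittingMap (isCompl_eigenspace_one_neg_one hK) η x) ↔
      ⅟(2 : R) • (x' + K x') = ⅟(2 : R) • (x + K x) ∧
        ∀ y, K y = y → η (⅟(2 : R) • (x' - K x')) y =
          η (⅟(2 : R) • (x - K x)) y + b (⅟(2 : R) • (x + K x)) y := by
  have mem_iff (y : V) : y ∈ End.eigenspace K 1 ↔ K y = y := by
    rw [End.mem_eigenspace_iff, one_smul]
  simp only [← projection_eigenspace_one_apply hK, ← projection_eigenspace_neg_one_apply hK,
    ← mem_iff]
  rw [Prod.ext_iff, Subtype.ext_iff, LinearMap.ext_iff, Subtype.forall]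
  rfl

end Involution

/-- Under the isomorphism `ρ₊ : X ↦ (P₊X, η(P₋X, ·)|_{E₊})`, the B-transformation
`id + B` of `V` corresponds to the b-field transformation
`e^{b₊}(x, ξ) = (x, ξ + b₊(x, ·))` of `E₊ × (E₊)*`, i.e. `ρ₊ ∘ (id + B) = e^{b₊} ∘ ρ₊`,
stated componentwise: the first components agree and the functionals on
`E₊ = {y | K y = y}` agree. -/
theorem stmt11 {V : Type*} [AddCommGroup V] [Module ℝ V] [FiniteDimensional ℝ V]
    (K : V →ₗ[ℝ] V) (hK : ∀ v, K (K v) = v)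
    (heig : finrank ℝ (Module.End.eigenspace K 1) = finrank ℝ (Module.End.eigenspace K (-1)))
    (η : LinearMap.BilinForm ℝ V)
    (hsymm : ∀ u v, η u v = η v u)
    (hnondeg : ∀ u, (∀ v, η u v = 0) → u = 0)
    (hanti : ∀ u v, η (K u) (K v) = - η u v)
    (B : V →ₗ[ℝ] V)
    (hBrange : ∀ u, K (B u) = - B u)
    (hBvanish : ∀ u, K u = - u → B u = 0)
    (hBskew : ∀ u v, η (B u) v = - η u (B v)) :
    ∀ X : V,
      ((1/2 : ℝ) • ((X + B X) + K (X + B X)) = (1/2 : ℝ) • (X + K X)) ∧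
      (∀ y : V, K y = y →
        η ((1/2 : ℝ) • ((X + B X) - K (X + B X))) y
          = η ((1/2 : ℝ) • (X - K X)) y + η (B ((1/2 : ℝ) • (X + K X))) y) := by
  have hrange (u : V) : B u ∈ End.eigenspace K (-1) := by simpa using hBrange u
  have hker (u : V) (hu : u ∈ End.eigenspace K (-1)) : B u = 0 := hBvanish u (by simpa using hu)
  simpa only [invOf_eq_inv, ← one_div, LinearMap.BilinForm.compLeft_apply] using fun X =>
    (splittingMap_eq_bFieldTransformation_iff hK η (η.compLeft B) X (X + B X)).mp
      (LinearMap.congr_fun (stmt11_general _ η hrange hker) X)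
end

section
/- On ℝⁿ let ∇ be the torsion-free affine connection determined by a symmetric Christoffel map Γ. For all vector fields X, Y, Z : ℝⁿ → ℝⁿ and one-forms α, β, γ : ℝⁿ → (ℝⁿ →L ℝ) differentiable at a point p, the Dorfman bracket satisfies ⟨⟦(X, α), (Y, β)⟧, (Z, γ)⟩(p) = ⟨(∇_{X(p)}Y, ∇_{X(p)}β)(p) − (∇_{Y(p)}X, ∇_{Y(p)}α)(p), (Z(p), γ(p))⟩ + ⟨(∇_{Z(p)}X, ∇_{Z(p)}α)(p), (Y(p), β(p))⟩, where the pairing of elements of ℝⁿ × (ℝⁿ)* is ⟨(v, ξ), (w, ζ)⟩ := ξ(w) + ζ(v). In particular the right-hand side is independent of the choice of symmetric Γ. -/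
/-!
Each ingredient of the Dorfman bracket can be rewritten with a torsion-free connection `∇`:
`[X, Y] = ∇_X Y - ∇_Y X`, `(L_X β)(w) = (∇_X β)(w) + β(∇_w X)`, and
`d(α(Y))(w) = (∇_w α)(Y) + α(∇_w Y)`. In the one-form part of the bracket the term `α(∇_w Y)`
coming from `-L_Y α` cancels the one coming from `d(α(Y))`, and what is left is the connection
formula.
-/

section Dorfman

variable {𝕜 E : Type*} [NontriviallyNormedField 𝕜] [NormedAddCommGroup E] [NormedSpace 𝕜 E]

/-- The covariant derivative `∇_v Y` at `p` of a vector field `Y` on a normed space, for the affine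
connection with Christoffel map `Γ`. -/
noncomputable def vectorCovDeriv (Γ : E → E →L[𝕜] E →L[𝕜] E) (v : E) (Y : E → E) (p : E) : E :=
  fderiv 𝕜 Y p v + Γ p v (Y p)

/-- The covariant derivative `∇_v β` at `p` of a one-form `β` on a normed space, for the affine
connection with Christoffel map `Γ`. -/
noncomputable def formCovDeriv (Γ : E → E →L[𝕜] E →L[𝕜] E) (v : E) (β : E → StrongDual 𝕜 E)
    (p : E) : StrongDual 𝕜 E :=
  fderiv 𝕜 β p v - (β p).comp (Γ p v)

/-- The covariant derivative at `p` along `v` of a section of `E ⊕ E*`, encoded as a pair of a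
vector field and a one-form; it acts componentwise. -/
noncomputable def pairCovDeriv (Γ : E → E →L[𝕜] E →L[𝕜] E) (v : E)
    (σ : (E → E) × (E → StrongDual 𝕜 E)) (p : E) : E × StrongDual 𝕜 E :=
  (vectorCovDeriv Γ v σ.1 p, formCovDeriv Γ v σ.2 p)

/-- The Lie derivative `L_X β` of a one-form `β` along a vector field `X`. -/
noncomputable def formLieDeriv (X : E → E) (β : E → StrongDual 𝕜 E) (p : E) : StrongDual 𝕜 E :=
  fderiv 𝕜 β p (X p) + (β p).comp (fderiv 𝕜 X p)

/-- The value at `p` of the Dorfman bracket `⟦σ, τ⟧` of two sections of `E ⊕ E*`, each encoded as a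
pair of a vector field and a one-form. -/
noncomputable def dorfmanBracket (σ τ : (E → E) × (E → StrongDual 𝕜 E)) (p : E) :
    E × StrongDual 𝕜 E :=
  (VectorField.lieBracket 𝕜 σ.1 τ.1 p,
    formLieDeriv σ.1 τ.2 p - formLieDeriv τ.1 σ.2 p + fderiv 𝕜 (fun q => σ.2 q (τ.1 q)) p)

/-- The canonical symmetric pairing on `E ⊕ E*`, without the factor `1 / 2` used by some authors. -/
def vectorFormPairing (a b : E × StrongDual 𝕜 E) : 𝕜 :=
  a.2 b.1 + b.2 a.1

variable {Γ : E → E →L[𝕜] E →L[𝕜] E} {X Y : E → E} {α β : E → StrongDual 𝕜 E} {p : E}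

theorem lieBracket_eq_vectorCovDeriv_sub (hΓ : ∀ u v, Γ p u v = Γ p v u) :
    VectorField.lieBracket 𝕜 X Y p =
      vectorCovDeriv Γ (X p) Y p - vectorCovDeriv Γ (Y p) X p := by
  rw [VectorField.lieBracket, vectorCovDeriv, vectorCovDeriv, hΓ (Y p) (X p),
    add_sub_add_right_eq_sub]

theorem formLieDeriv_apply_eq_covDeriv (hΓ : ∀ u v, Γ p u v = Γ p v u) (w : E) :
    formLieDeriv X β p w =
      formCovDeriv Γ (X p) β p w + β p (vectorCovDeriv Γ w X p) := by
  simp only [formLieDeriv, formCovDeriv, vectorCovDeriv, add_apply, sub_apply,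
    ContinuousLinearMap.comp_apply, map_add, hΓ w (X p)]
  ring

theorem fderiv_form_apply_eq_covDeriv (Γ : E → E →L[𝕜] E →L[𝕜] E)
    (hα : DifferentiableAt 𝕜 α p) (hY : DifferentiableAt 𝕜 Y p) (w : E) :
    fderiv 𝕜 (fun q => α q (Y q)) p w =
      formCovDeriv Γ w α p (Y p) + α p (vectorCovDeriv Γ w Y p) := by
  simp only [fderiv_clm_apply hα hY, formCovDeriv, vectorCovDeriv, add_apply, sub_apply,
    ContinuousLinearMap.comp_apply, ContinuousLinearMap.flip_apply, map_add]
  ring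

theorem dorfmanBracket_snd_apply_eq_covDeriv (hΓ : ∀ u v, Γ p u v = Γ p v u)
    (hα : DifferentiableAt 𝕜 α p) (hY : DifferentiableAt 𝕜 Y p) (w : E) :
    (dorfmanBracket (X, α) (Y, β) p).2 w =
      (formCovDeriv Γ (X p) β p - formCovDeriv Γ (Y p) α p) w
        + (formCovDeriv Γ w α p (Y p) + β p (vectorCovDeriv Γ w X p)) := by
  simp only [dorfmanBracket, add_apply, sub_apply, formLieDeriv_apply_eq_covDeriv hΓ,
    fderiv_form_apply_eq_covDeriv Γ hα hY]
  ring

theorem stmt12_general (hΓ : ∀ u v, Γ p u v = Γ p v u)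
    (_hX : DifferentiableAt 𝕜 X p) (hY : DifferentiableAt 𝕜 Y p)
    (hα : DifferentiableAt 𝕜 α p) (_hβ : DifferentiableAt 𝕜 β p) (c : E × StrongDual 𝕜 E) :
    vectorFormPairing (dorfmanBracket (X, α) (Y, β) p) c =
      vectorFormPairing (pairCovDeriv Γ (X p) (Y, β) p - pairCovDeriv Γ (Y p) (X, α) p) c
        + vectorFormPairing (pairCovDeriv Γ c.1 (X, α) p) (Y p, β p) := by
  have vector_part : (dorfmanBracket (X, α) (Y, β) p).1 =
      vectorCovDeriv Γ (X p) Y p - vectorCovDeriv Γ (Y p) X p :=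
    lieBracket_eq_vectorCovDeriv_sub hΓ
  have form_part := dorfmanBracket_snd_apply_eq_covDeriv (X := X) (β := β) hΓ hα hY c.1
  simp only [vectorFormPairing, pairCovDeriv, Prod.fst_sub, Prod.snd_sub, vector_part, form_part]
  ring

end Dorfman

/-- On `ℝⁿ`, for any torsion-free affine connection `∇` given by a symmetric Christoffel
map `Γ`, the Dorfman bracket paired against `(Z, γ)` is expressed by the connection
formula `⟨∇_X e₂ − ∇_Y e₁, e₃⟩ + ⟨∇_Z e₁, e₂⟩`; in particular the right-hand side is
independent of the choice of symmetric `Γ`. -/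
theorem stmt12 (n : ℕ)
    (Γ : (Fin n → ℝ) → ((Fin n → ℝ) →L[ℝ] (Fin n → ℝ) →L[ℝ] (Fin n → ℝ)))
    (hΓ : ∀ p u v, Γ p u v = Γ p v u)
    (X Y Z : (Fin n → ℝ) → (Fin n → ℝ))
    (α β γ : (Fin n → ℝ) → ((Fin n → ℝ) →L[ℝ] ℝ))
    (p : Fin n → ℝ)
    (hX : DifferentiableAt ℝ X p) (hY : DifferentiableAt ℝ Y p)
    (hZ : DifferentiableAt ℝ Z p)
    (hα : DifferentiableAt ℝ α p) (hβ : DifferentiableAt ℝ β p)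
    (hγ : DifferentiableAt ℝ γ p) :
    -- pairing of the Dorfman bracket ⟦(X, α), (Y, β)⟧ with (Z, γ) at p
    ((fderiv ℝ β p (X p) + (β p).comp (fderiv ℝ X p))
        - (fderiv ℝ α p (Y p) + (α p).comp (fderiv ℝ Y p))
        + fderiv ℝ (fun q => α q (Y q)) p) (Z p)
      + γ p (fderiv ℝ Y p (X p) - fderiv ℝ X p (Y p))
    = -- ⟨(∇_{X(p)}Y − ∇_{Y(p)}X, ∇_{X(p)}β − ∇_{Y(p)}α), (Z(p), γ(p))⟩
      ((fderiv ℝ β p (X p) - (β p).comp (Γ p (X p)))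
          - (fderiv ℝ α p (Y p) - (α p).comp (Γ p (Y p)))) (Z p)
      + γ p ((fderiv ℝ Y p (X p) + Γ p (X p) (Y p))
          - (fderiv ℝ X p (Y p) + Γ p (Y p) (X p)))
      -- + ⟨(∇_{Z(p)}X, ∇_{Z(p)}α), (Y(p), β(p))⟩
      + ((fderiv ℝ α p (Z p) - (α p).comp (Γ p (Z p))) (Y p)
          + β p (fderiv ℝ X p (Z p) + Γ p (Z p) (X p))) :=
  stmt12_general (hΓ p) hX hY hα hβ (Z p, γ p)
end

section
/- In the flat para-Hermitian model V = ℝⁿ × ℝⁿ, let X, Y : V → V be vector fields differentiable at p whose values all lie in E₊ = ℝⁿ × {0}. Then ⟦X, Y⟧ᴰ(p) ∈ E₊. Likewise, if all values of X and Y lie in E₋ = {0} × ℝⁿ, then ⟦X, Y⟧ᴰ(p) ∈ E₋. (The eigenbundles of K are weakly integrable, i.e. involutive under the D-bracket of K.) -/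
/-- Dot product on `ℝⁿ`. -/
def flatDot (n : ℕ) (u v : Fin n → ℝ) : ℝ := ∑ i, u i * v i

/-- The split-signature metric `η((x, x̃), (y, ỹ)) = x̃·y + x·ỹ` of the flat
para-Hermitian model `V = ℝⁿ × ℝⁿ`. -/
def flatEta (n : ℕ) (w w' : (Fin n → ℝ) × (Fin n → ℝ)) : ℝ :=
  flatDot n w.2 w'.1 + flatDot n w.1 w'.2

/-!
Both eigenbundles are closed `η`-isotropic subspaces. If `X` takes values in a closed subspace `L`,
so does each difference quotient of `X`, hence `DX_p(w) ∈ L` for every `w`. So the Lie bracket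
`DY_p(X(p)) - DX_p(Y(p))` of two `L`-valued fields lies in `L`; and if `L` is isotropic, the term
`η(DX_p(w), Y(p))` by which the D-bracket differs from the Lie bracket vanishes.
-/

open Filter Topology VectorField

section DBracket

variable {𝕜 E F V : Type*} [NontriviallyNormedField 𝕜]
  [NormedAddCommGroup E] [NormedSpace 𝕜 E] [NormedAddCommGroup F] [NormedSpace 𝕜 F]
  [NormedAddCommGroup V] [NormedSpace 𝕜 V]

theorem apply_mem_of_hasFDerivAt {S : Submodule 𝕜 F} (hS : IsClosed (S : Set F))
    {f : E → F} {f' : E →L[𝕜] F} {p : E} (hf : HasFDerivAt f f' p) (hfS : ∀ᶠ q in 𝓝 p, f q ∈ S)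
    (w : E) : f' w ∈ S := by
  have h_quot : Tendsto (fun c : 𝕜 ↦ c • (f (p + c⁻¹ • w) - f p)) (Bornology.cobounded 𝕜)
      (𝓝 (f' w)) := hf.lim w tendsto_norm_cobounded_atTop
  have h_base : Tendsto (fun c : 𝕜 ↦ p + c⁻¹ • w) (Bornology.cobounded 𝕜) (𝓝 p) := by
    simpa only [zero_smul, add_zero] using
      ((tendsto_inv₀_cobounded (α := 𝕜)).smul_const w).const_add p
  refine hS.mem_of_tendsto h_quot ?_
  filter_upwards [h_base.eventually hfS] with c hc
  exact S.smul_mem c (S.sub_mem hc hfS.self_of_nhds)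

theorem lieBracket_mem {L : Submodule 𝕜 V} (hL : IsClosed (L : Set V)) {X Y : V → V} {p : V}
    (hX : DifferentiableAt 𝕜 X p) (hY : DifferentiableAt 𝕜 Y p)
    (hXL : ∀ᶠ q in 𝓝 p, X q ∈ L) (hYL : ∀ᶠ q in 𝓝 p, Y q ∈ L) : lieBracket 𝕜 X Y p ∈ L :=
  L.sub_mem (apply_mem_of_hasFDerivAt hL hY.hasFDerivAt hYL (X p))
    (apply_mem_of_hasFDerivAt hL hX.hasFDerivAt hXL (Y p))

/-- `ξ` is a value at `p` of the D-bracket `⟦X, Y⟧ᴰ` of the vector fields `X` and `Y` with respect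
to the bilinear form `B`. The bracket is encoded by the relation that characterizes it, so that `B`
may be degenerate; `ξ` is unique when `B.SeparatingLeft`. -/
def IsDBracketAt (B : LinearMap.BilinForm 𝕜 V) (X Y : V → V) (p ξ : V) : Prop :=
  ∀ w, B ξ w = B (lieBracket 𝕜 X Y p) w + B (fderiv 𝕜 X p w) (Y p)

theorem isDBracketAt_lieBracket {B : LinearMap.BilinForm 𝕜 V} {L : Submodule 𝕜 V}
    (hL : IsClosed (L : Set V)) (hLB : L ≤ B.orthogonal L) {X Y : V → V} {p : V}
    (hX : DifferentiableAt 𝕜 X p) (hXL : ∀ᶠ q in 𝓝 p, X q ∈ L) (hYL : Y p ∈ L) :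
    IsDBracketAt B X Y p (lieBracket 𝕜 X Y p) := by
  intro w
  have h_corr : B (fderiv 𝕜 X p w) (Y p) = 0 :=
    hLB hYL _ (apply_mem_of_hasFDerivAt hL hX.hasFDerivAt hXL w)
  rw [h_corr, add_zero]

theorem stmt14_general {B : LinearMap.BilinForm 𝕜 V} {L : Submodule 𝕜 V}
    (hL : IsClosed (L : Set V)) (hLB : L ≤ B.orthogonal L) {X Y : V → V} {p : V}
    (hX : DifferentiableAt 𝕜 X p) (hY : DifferentiableAt 𝕜 Y p)
    (hXL : ∀ᶠ q in 𝓝 p, X q ∈ L) (hYL : ∀ᶠ q in 𝓝 p, Y q ∈ L) :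
    ∃ ξ, IsDBracketAt B X Y p ξ ∧ ξ ∈ L :=
  ⟨lieBracket 𝕜 X Y p, isDBracketAt_lieBracket hL hLB hX hXL hYL.self_of_nhds,
    lieBracket_mem hL hX hY hXL hYL⟩

end DBracket

section HyperbolicForm

variable {R M : Type*} [CommSemiring R] [AddCommMonoid M] [Module R M]

/-- The hyperbolic form `((x, x̃), (y, ỹ)) ↦ B x̃ y + B x ỹ` on `M × M` built from a bilinear form
`B` on `M`. For the dot product on `ℝⁿ` it is the metric `η`. -/
def hyperbolicForm (B : LinearMap.BilinForm R M) : LinearMap.BilinForm R (M × M) :=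
  B.compl₁₂ (LinearMap.snd R M M) (LinearMap.fst R M M) +
    B.compl₁₂ (LinearMap.fst R M M) (LinearMap.snd R M M)

theorem hyperbolicForm_apply (B : LinearMap.BilinForm R M) (w w' : M × M) :
    hyperbolicForm B w w' = B w.2 w'.1 + B w.1 w'.2 := rfl

theorem fst_le_orthogonal_hyperbolicForm (B : LinearMap.BilinForm R M) :
    Submodule.fst R M M ≤ (hyperbolicForm B).orthogonal (Submodule.fst R M M) := by
  intro v (hv : v.2 = 0) u (hu : u.2 = 0)
  simp only [hyperbolicForm_apply, hu, hv, map_zero, LinearMap.zero_apply, add_zero]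

theorem snd_le_orthogonal_hyperbolicForm (B : LinearMap.BilinForm R M) :
    Submodule.snd R M M ≤ (hyperbolicForm B).orthogonal (Submodule.snd R M M) := by
  intro v (hv : v.1 = 0) u (hu : u.1 = 0)
  simp only [hyperbolicForm_apply, hu, hv, map_zero, LinearMap.zero_apply, add_zero]

end HyperbolicForm

theorem isDBracketAt_hyperbolicForm_dotProductBilin_iff {n : ℕ}
    {X Y : (Fin n → ℝ) × (Fin n → ℝ) → (Fin n → ℝ) × (Fin n → ℝ)}
    {p ξ : (Fin n → ℝ) × (Fin n → ℝ)} :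
    IsDBracketAt (hyperbolicForm (dotProductBilin ℝ ℝ)) X Y p ξ ↔
      ∀ w, flatEta n ξ w = flatEta n (fderiv ℝ Y p (X p) - fderiv ℝ X p (Y p)) w
        + flatEta n (fderiv ℝ X p w) (Y p) :=
  Iff.rfl

/-- In the flat para-Hermitian model the eigenbundles `E₊ = ℝⁿ × {0}` and
`E₋ = {0} × ℝⁿ` are weakly integrable: the D-bracket (characterized against `η`)
of vector fields valued in `E₊` (resp. `E₋`) again lies in `E₊` (resp. `E₋`). -/
theorem stmt14 (n : ℕ)
    (X Y : (Fin n → ℝ) × (Fin n → ℝ) → (Fin n → ℝ) × (Fin n → ℝ))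
    (p : (Fin n → ℝ) × (Fin n → ℝ))
    (hX : DifferentiableAt ℝ X p) (hY : DifferentiableAt ℝ Y p) :
    ((∀ q, (X q).2 = 0) → (∀ q, (Y q).2 = 0) →
      ∃ ξ : (Fin n → ℝ) × (Fin n → ℝ),
        (∀ w, flatEta n ξ w
          = flatEta n (fderiv ℝ Y p (X p) - fderiv ℝ X p (Y p)) w
            + flatEta n (fderiv ℝ X p w) (Y p)) ∧ ξ.2 = 0) ∧
    ((∀ q, (X q).1 = 0) → (∀ q, (Y q).1 = 0) →
      ∃ ξ : (Fin n → ℝ) × (Fin n → ℝ),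
        (∀ w, flatEta n ξ w
          = flatEta n (fderiv ℝ Y p (X p) - fderiv ℝ X p (Y p)) w
            + flatEta n (fderiv ℝ X p w) (Y p)) ∧ ξ.1 = 0) := by
  simp only [← isDBracketAt_hyperbolicForm_dotProductBilin_iff]
  exact ⟨fun hX' hY' ↦ stmt14_general (Submodule.closed_of_finiteDimensional _)
      (fst_le_orthogonal_hyperbolicForm _) hX hY (.of_forall hX') (.of_forall hY'),
    fun hX' hY' ↦ stmt14_general (Submodule.closed_of_finiteDimensional _)
      (snd_le_orthogonal_hyperbolicForm _) hX hY (.of_forall hX') (.of_forall hY')⟩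
end

section
/- In the flat para-Hermitian model V = ℝⁿ × ℝⁿ with a differentiable B-field B : V → L(ℝⁿ, ℝⁿ) (each B_q skew for the dot product), let X, Y : V → V be vector fields differentiable at p, and let z ∈ ℝⁿ. Writing x := X₊(p) and y := Y₊(p) for the first components, the flat D-bracket of the deformed projections satisfies: η(⟦P₊ᴮX, P₊ᴮY⟧ᴰ(p), (z, B_p z)) = (∂_{(x, B_p x)} b)(y, z) + (∂_{(y, B_p y)} b)(z, x) + (∂_{(z, B_p z)} b)(x, y), where (∂_h b)(u, w) denotes the Fréchet derivative at p, in the direction h ∈ V, of the function q ↦ B_q u · w. -/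
/-!
Each graph `{(u, B_q u)}` of a skew map is isotropic. Hence when the derivative of a section
`q ↦ (f q, B_q (f q))` is paired with an element of the fibre at `p`, the derivatives of `f` drop
out and only `(∂_h B)(f p)` survives. The three terms of the D-bracket thus become derivatives of
the two-form `b`, and the minus sign in front of the second one is absorbed by the skewness of `∂b`.
-/

open Filter VectorField
open scoped Topology

section GraphSection

variable {𝕜 M E F : Type*} [NontriviallyNormedField 𝕜]
  [NormedAddCommGroup E] [NormedSpace 𝕜 E] [NormedAddCommGroup F] [NormedSpace 𝕜 F]

/-- The neutral symmetric form on `E × F` induced by a pairing `φ` of `F` with `E`, for which both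
factors are isotropic. It plays the role of the para-Hermitian metric `η`. -/
noncomputable def neutralForm (φ : F →L[𝕜] E →L[𝕜] 𝕜) : E × F →L[𝕜] E × F →L[𝕜] 𝕜 :=
  φ.bilinearComp (.snd 𝕜 E F) (.fst 𝕜 E F) + φ.flip.bilinearComp (.fst 𝕜 E F) (.snd 𝕜 E F)

lemma neutralForm_apply (φ : F →L[𝕜] E →L[𝕜] 𝕜) (v w : E × F) :
    neutralForm φ v w = φ v.2 w.1 + φ w.2 v.1 :=
  rfl

lemma neutralForm_graph_eq_zero {φ : F →L[𝕜] E →L[𝕜] 𝕜} {A : E →L[𝕜] F}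
    (hA : ∀ u v, φ (A u) v = -φ (A v) u) (u v : E) :
    neutralForm φ (u, A u) (v, A v) = 0 := by
  rw [neutralForm_apply, hA u v, neg_add_cancel]

/-- The section `q ↦ (f q, B_q (f q))` of the graph bundle of `B`, that is, of the `+1` eigenbundle
of the `B`-transformed structure; `P₊ᴮ X` is the case where `f` is the first component of `X`. -/
def graphSection (B : M → E →L[𝕜] F) (f : M → E) : M → E × F :=
  fun q => (f q, B q (f q))

lemma graphSection_apply (B : M → E →L[𝕜] F) (f : M → E) (q : M) :
    graphSection B f q = (f q, B q (f q)) :=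
  rfl

variable [NormedAddCommGroup M] [NormedSpace 𝕜 M]
  {φ : F →L[𝕜] E →L[𝕜] 𝕜} {B : M → E →L[𝕜] F} {p : M}

lemma fderiv_pairing_apply (φ : F →L[𝕜] E →L[𝕜] 𝕜) (hB : DifferentiableAt 𝕜 B p)
    (u v : E) (h : M) :
    fderiv 𝕜 (fun q => φ (B q u) v) p h = φ (fderiv 𝕜 B p h u) v := by
  let evalPairing : (E →L[𝕜] F) →L[𝕜] 𝕜 := (φ.flip v).comp (.apply 𝕜 F u)
  exact DFunLike.congr_fun (evalPairing.hasFDerivAt.comp p hB.hasFDerivAt).fderiv h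

lemma pairing_fderiv_skew (hB : DifferentiableAt 𝕜 B p)
    (hskew : ∀ᶠ q in 𝓝 p, ∀ u v, φ (B q u) v = -φ (B q v) u) (h : M) (u v : E) :
    φ (fderiv 𝕜 B p h u) v = -φ (fderiv 𝕜 B p h v) u := by
  have hb : (fun q => φ (B q u) v) =ᶠ[𝓝 p] fun q => -φ (B q v) u :=
    hskew.mono fun q hq => hq u v
  rw [← fderiv_pairing_apply φ hB, hb.fderiv_eq, fderiv_fun_neg, neg_apply,
    fderiv_pairing_apply φ hB]

lemma fderiv_graphSection_apply (hB : DifferentiableAt 𝕜 B p) {f : M → E}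
    (hf : DifferentiableAt 𝕜 f p) (h : M) :
    fderiv 𝕜 (graphSection B f) p h =
      (fderiv 𝕜 f p h, B p (fderiv 𝕜 f p h)) + (0, fderiv 𝕜 B p h (f p)) := by
  have hderiv := (hf.hasFDerivAt.prodMk (hB.hasFDerivAt.clm_apply hf.hasFDerivAt)).fderiv
  exact (DFunLike.congr_fun hderiv h).trans (by simp)

lemma neutralForm_fderiv_graphSection (hB : DifferentiableAt 𝕜 B p)
    (hskew : ∀ u v, φ (B p u) v = -φ (B p v) u) {f : M → E}
    (hf : DifferentiableAt 𝕜 f p) (h : M) (w : E) :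
    neutralForm φ (fderiv 𝕜 (graphSection B f) p h) (w, B p w) =
      φ (fderiv 𝕜 B p h (f p)) w := by
  rw [fderiv_graphSection_apply hB hf, map_add, add_apply,
    neutralForm_graph_eq_zero hskew, zero_add, neutralForm_apply, map_zero, add_zero]

end GraphSection

section DBracket

variable {𝕜 V E F : Type*} [NontriviallyNormedField 𝕜] [NormedAddCommGroup V] [NormedSpace 𝕜 V]
  [NormedAddCommGroup E] [NormedSpace 𝕜 E] [NormedAddCommGroup F] [NormedSpace 𝕜 F]

/-- The flat D-bracket of `U` and `W`, lowered with `η`: the value at `w` is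
`η(⟦U, W⟧ᴰ(p), w)`. The lowered form exists even when `η` does not identify `V` with its dual. -/
noncomputable def dBracketForm (η : V →L[𝕜] V →L[𝕜] 𝕜) (U W : V → V) (p w : V) : 𝕜 :=
  η (lieBracket 𝕜 U W p) w + η (fderiv 𝕜 U p w) (W p)

theorem stmt15_general (φ : F →L[𝕜] E →L[𝕜] 𝕜) {B : E × F → E →L[𝕜] F} {p : E × F}
    (hB : DifferentiableAt 𝕜 B p)
    (hskew : ∀ᶠ q in 𝓝 p, ∀ u v, φ (B q u) v = -φ (B q v) u)
    {f g : E × F → E} (hf : DifferentiableAt 𝕜 f p) (hg : DifferentiableAt 𝕜 g p) (z : E) :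
    dBracketForm (neutralForm φ) (graphSection B f) (graphSection B g) p (z, B p z) =
      fderiv 𝕜 (fun q => φ (B q (g p)) z) p (f p, B p (f p)) +
        fderiv 𝕜 (fun q => φ (B q z) (f p)) p (g p, B p (g p)) +
        fderiv 𝕜 (fun q => φ (B q (f p)) (g p)) p (z, B p z) := by
  calc dBracketForm (neutralForm φ) (graphSection B f) (graphSection B g) p (z, B p z)
    _ = φ (fderiv 𝕜 B p (f p, B p (f p)) (g p)) z - φ (fderiv 𝕜 B p (g p, B p (g p)) (f p)) z +
          φ (fderiv 𝕜 B p (z, B p z) (f p)) (g p) := by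
      simp only [dBracketForm, lieBracket, graphSection_apply, map_sub, sub_apply,
        neutralForm_fderiv_graphSection hB hskew.self_of_nhds hf,
        neutralForm_fderiv_graphSection hB hskew.self_of_nhds hg]
    _ = φ (fderiv 𝕜 B p (f p, B p (f p)) (g p)) z + φ (fderiv 𝕜 B p (g p, B p (g p)) z) (f p) +
          φ (fderiv 𝕜 B p (z, B p z) (f p)) (g p) := by
      rw [pairing_fderiv_skew hB hskew _ (f p) z, sub_neg_eq_add]
    _ = _ := by simp only [fderiv_pairing_apply φ hB]

end DBracket

section FlatModel

/-- `flatDot` as a continuous bilinear form, the pairing that identifies the flat model with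
`ℝⁿ × ℝⁿ` under `neutralForm`. -/
noncomputable def flatDotL (n : ℕ) : (Fin n → ℝ) →L[ℝ] (Fin n → ℝ) →L[ℝ] ℝ :=
  ∑ i, (ContinuousLinearMap.mul ℝ ℝ).bilinearComp (.proj i) (.proj i)

lemma flatDotL_apply (n : ℕ) (u v : Fin n → ℝ) : flatDotL n u v = flatDot n u v := by
  simp [flatDotL, flatDot]

lemma flatDot_comm (n : ℕ) (u v : Fin n → ℝ) : flatDot n u v = flatDot n v u :=
  dotProduct_comm u v

lemma neutralForm_flatDotL (n : ℕ) (v w : (Fin n → ℝ) × (Fin n → ℝ)) :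
    neutralForm (flatDotL n) v w = flatEta n v w := by
  rw [neutralForm_apply, flatDotL_apply, flatDotL_apply, flatEta, flatDot_comm n w.2]

lemma flatDotL_skew {n : ℕ} {A : (Fin n → ℝ) →L[ℝ] (Fin n → ℝ)}
    (hA : ∀ u v, flatDot n (A u) v = -flatDot n u (A v)) (u v : Fin n → ℝ) :
    flatDotL n (A u) v = -flatDotL n (A v) u := by
  rw [flatDotL_apply, flatDotL_apply, hA, flatDot_comm]

end FlatModel

/-- In the flat para-Hermitian model with a B-field, the D-bracket of the deformed
projections paired against `(z, B_p z)` is the cyclic sum of derivatives of the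
two-form `b_q(u, w) = B_q u · w`. -/
theorem stmt15 (n : ℕ)
    (B : (Fin n → ℝ) × (Fin n → ℝ) → ((Fin n → ℝ) →L[ℝ] (Fin n → ℝ)))
    (hBskew : ∀ q u v, flatDot n (B q u) v = - flatDot n u (B q v))
    (hB : Differentiable ℝ B)
    (X Y : (Fin n → ℝ) × (Fin n → ℝ) → (Fin n → ℝ) × (Fin n → ℝ))
    (p : (Fin n → ℝ) × (Fin n → ℝ))
    (hX : DifferentiableAt ℝ X p) (hY : DifferentiableAt ℝ Y p)
    (z : Fin n → ℝ) :
    let PBX : (Fin n → ℝ) × (Fin n → ℝ) → (Fin n → ℝ) × (Fin n → ℝ) :=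
      fun q => ((X q).1, B q ((X q).1))
    let PBY : (Fin n → ℝ) × (Fin n → ℝ) → (Fin n → ℝ) × (Fin n → ℝ) :=
      fun q => ((Y q).1, B q ((Y q).1))
    let x := (X p).1
    let y := (Y p).1
    flatEta n (fderiv ℝ PBY p (PBX p) - fderiv ℝ PBX p (PBY p)) (z, B p z)
        + flatEta n (fderiv ℝ PBX p (z, B p z)) (PBY p)
      = fderiv ℝ (fun q => flatDot n (B q y) z) p (x, B p x)
        + fderiv ℝ (fun q => flatDot n (B q z) x) p (y, B p y)
        + fderiv ℝ (fun q => flatDot n (B q x) y) p (z, B p z) := by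
  simpa +unfoldPartialApp only [dBracketForm, lieBracket, graphSection, neutralForm_flatDotL,
    flatDotL_apply] using stmt15_general (flatDotL n) (hB p)
      (.of_forall fun q => flatDotL_skew (hBskew q)) hX.fst hY.fst z
end

section
/- Let η be a (constant) nondegenerate symmetric bilinear form on ℝ^{2n} and K : ℝ^{2n} → L(ℝ^{2n}, ℝ^{2n}) a field of endomorphisms with K_q ∘ K_q = id and η(K_q u, K_q v) = −η(u, v) for all q, u, v, so that (K, η) is an almost para-Hermitian structure on ℝ^{2n} whose underlying metric is flat (Levi-Civita connection = Fréchet derivative D). Let Y : ℝ^{2n} → ℝ^{2n} be a vector field, assume K and Y are differentiable at p, and let v ∈ ℝ^{2n}. Then there is a unique vector (∇ᶜ_v Y)(p) satisfying the contorsion formula η((∇ᶜ_v Y)(p), z) = η(DY_p(v), z) − (1/2)·η((DK_p(v))(Y(p)), K_p z) for all z ∈ ℝ^{2n}, and it is given by (∇ᶜ_v Y)(p) = P₊(p)(D(P₊Y)_p(v)) + P₋(p)(D(P₋Y)_p(v)) = DY_p(v) + (1/2)·K_p((DK_p(v))(Y(p))), where (P± Y)(q) := (1/2)(Y(q) ±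 K_q(Y(q))) and P±(p) := (1/2)(id ± K_p). -/
/-! Since `K_p` is an anti-isometric involution, it is skew for `η`, so the contorsion term
`-½ η((DK_p v)(Y p), K_p z)` equals `½ η(K_p((DK_p v)(Y p)), z)` and nondegeneracy reads off the
vector. On the other hand `D(P±Y)_p v = P±(p)(DY_p v) ± ½ (DK_p v)(Y p)`; applying the idempotents
`P±(p)` and adding, `P₊ + P₋ = id` and `P₊ - P₋ = K` give the same vector. -/

section Contorsion

variable {R M : Type*} [CommRing R] [AddCommGroup M] [Module R M] {η : LinearMap.BilinForm R M}

theorem isSkewAdjoint_of_involutive {k : Module.End R M} (hk : Function.Involutive k)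
    (hanti : ∀ u w, η (k u) (k w) = -η u w) : η.IsSkewAdjoint k := fun u w => by
  calc η (k u) w = η (k u) (k (k w)) := by rw [hk w]
    _ = -η u (k w) := hanti u (k w)
    _ = η u (-k w) := (map_neg (η u) (k w)).symm

theorem forall_apply_eq_sub_mul_apply_iff {k : Module.End R M} (hη : η.SeparatingLeft)
    (hk : η.IsSkewAdjoint k) (c : R) (a b ξ : M) :
    (∀ z, η ξ z = η a z - c * η b (k z)) ↔ ξ = a + c • k b := by
  have hskew (z : M) : η a z - c * η b (k z) = η (a + c • k b) z := by
    have h : η (k b) z = -η b (k z) := (hk b z).trans (map_neg (η b) (k z))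
    simp only [map_add, map_smul, LinearMap.add_apply, LinearMap.smul_apply, smul_eq_mul, h]
    ring
  have hinj : Function.Injective η :=
    LinearMap.ker_eq_bot.mp (LinearMap.separatingLeft_iff_ker_eq_bot.mp hη)
  simp only [hskew]
  exact LinearMap.ext_iff.symm.trans hinj.eq_iff

end Contorsion

section Projections

variable {𝕜 F : Type*} [NontriviallyNormedField 𝕜] [NormedAddCommGroup F] [NormedSpace 𝕜 F]

/-- The operator `P₊ = ½ (id + k)`, for an involution `k` the projection onto its
`1`-eigenspace along its `-1`-eigenspace. -/
noncomputable def paraProjPos (k : F →L[𝕜] F) : F →L[𝕜] F :=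
  (1 / 2 : 𝕜) • (ContinuousLinearMap.id 𝕜 F + k)

/-- The operator `P₋ = ½ (id - k)`, for an involution `k` the projection onto its
`-1`-eigenspace along its `1`-eigenspace. -/
noncomputable def paraProjNeg (k : F →L[𝕜] F) : F →L[𝕜] F :=
  (1 / 2 : 𝕜) • (ContinuousLinearMap.id 𝕜 F - k)

theorem paraProjPos_apply (k : F →L[𝕜] F) (x : F) :
    paraProjPos k x = (1 / 2 : 𝕜) • (x + k x) := rfl

theorem paraProjNeg_apply (k : F →L[𝕜] F) (x : F) :
    paraProjNeg k x = (1 / 2 : 𝕜) • (x - k x) := rfl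

theorem paraProjPos_neg (k : F →L[𝕜] F) : paraProjPos (-k) = paraProjNeg k := by
  rw [paraProjPos, paraProjNeg, sub_eq_add_neg]

variable [NeZero (2 : 𝕜)]

theorem paraProjPos_add_paraProjNeg (k : F →L[𝕜] F) (x : F) :
    paraProjPos k x + paraProjNeg k x = x := by
  rw [paraProjPos_apply, paraProjNeg_apply, ← smul_add, add_add_sub_cancel, smul_add, ← add_smul,
    add_halves, one_smul]

theorem paraProjPos_sub_paraProjNeg (k : F →L[𝕜] F) (x : F) :
    paraProjPos k x - paraProjNeg k x = k x := by
  rw [paraProjPos_apply, paraProjNeg_apply, ← smul_sub, add_sub_sub_cancel, smul_add, ← add_smul,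
    add_halves, one_smul]

theorem paraProjPos_paraProjPos {k : F →L[𝕜] F} (hk : Function.Involutive k) (x : F) :
    paraProjPos k (paraProjPos k x) = paraProjPos k x := by
  have hfix : k (paraProjPos k x) = paraProjPos k x := by
    rw [paraProjPos_apply, map_smul, map_add, hk x, add_comm]
  rw [paraProjPos_apply k (paraProjPos k x), hfix, smul_add, ← add_smul, add_halves, one_smul]

end Projections

section CanonicalConnection

variable {𝕜 E F : Type*} [NontriviallyNormedField 𝕜]
  [NormedAddCommGroup E] [NormedSpace 𝕜 E] [NormedAddCommGroup F] [NormedSpace 𝕜 F]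
  {K : E → F →L[𝕜] F} {Y : E → F} {p : E}

/-- `ξ` is a value of the canonical connection `(∇ᶜ_v Y)(p)`: it satisfies the contorsion formula
relative to the flat connection. The connection acts on sections `Y : E → F` of a trivial bundle;
the tangent bundle is the case `F = E`. -/
def IsCanonicalDeriv (η : LinearMap.BilinForm 𝕜 F) (K : E → F →L[𝕜] F) (Y : E → F) (p v : E)
    (ξ : F) : Prop :=
  ∀ z, η ξ z = η (fderiv 𝕜 Y p v) z - (1 / 2) * η (fderiv 𝕜 K p v (Y p)) (K p z)

/-- The derivative of the flat connection compressed to the eigenbundles of `K`,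
`P₊(p)(D(P₊Y)_p v) + P₋(p)(D(P₋Y)_p v)`. -/
noncomputable def projectedDeriv (K : E → F →L[𝕜] F) (Y : E → F) (p v : E) : F :=
  paraProjPos (K p) (fderiv 𝕜 (fun q => paraProjPos (K q) (Y q)) p v) +
    paraProjNeg (K p) (fderiv 𝕜 (fun q => paraProjNeg (K q) (Y q)) p v)

theorem isCanonicalDeriv_iff {η : LinearMap.BilinForm 𝕜 F} (hη : η.SeparatingLeft)
    (hK : Function.Involutive (K p)) (hanti : ∀ u w, η (K p u) (K p w) = -η u w) (v : E) (ξ : F) :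
    IsCanonicalDeriv η K Y p v ξ ↔
      ξ = fderiv 𝕜 Y p v + (1 / 2 : 𝕜) • K p (fderiv 𝕜 K p v (Y p)) :=
  forall_apply_eq_sub_mul_apply_iff hη
    (isSkewAdjoint_of_involutive (k := (K p).toLinearMap) hK hanti) _ _ _ ξ

theorem fderiv_paraProjPos_apply (hKd : DifferentiableAt 𝕜 K p) (hY : DifferentiableAt 𝕜 Y p)
    (v : E) :
    fderiv 𝕜 (fun q => paraProjPos (K q) (Y q)) p v =
      paraProjPos (K p) (fderiv 𝕜 Y p v) + (1 / 2 : 𝕜) • fderiv 𝕜 K p v (Y p) := by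
  have hP : HasFDerivAt (fun q => paraProjPos (K q)) ((1 / 2 : 𝕜) • fderiv 𝕜 K p) p :=
    (hKd.hasFDerivAt.const_add _).fun_const_smul _
  rw [(hP.clm_apply hY.hasFDerivAt).fderiv]
  rfl

variable [NeZero (2 : 𝕜)]

theorem paraProjPos_fderiv_paraProjPos (hK : Function.Involutive (K p))
    (hKd : DifferentiableAt 𝕜 K p) (hY : DifferentiableAt 𝕜 Y p) (v : E) :
    paraProjPos (K p) (fderiv 𝕜 (fun q => paraProjPos (K q) (Y q)) p v) =
      paraProjPos (K p) (fderiv 𝕜 Y p v + (1 / 2 : 𝕜) • fderiv 𝕜 K p v (Y p)) := by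
  rw [fderiv_paraProjPos_apply hKd hY, map_add, paraProjPos_paraProjPos hK, ← map_add]

theorem paraProjNeg_fderiv_paraProjNeg (hK : Function.Involutive (K p))
    (hKd : DifferentiableAt 𝕜 K p) (hY : DifferentiableAt 𝕜 Y p) (v : E) :
    paraProjNeg (K p) (fderiv 𝕜 (fun q => paraProjNeg (K q) (Y q)) p v) =
      paraProjNeg (K p) (fderiv 𝕜 Y p v - (1 / 2 : 𝕜) • fderiv 𝕜 K p v (Y p)) := by
  -- `P₋` for `K` is `P₊` for the involution `-K`
  have hneg : Function.Involutive (-K p) := fun u => by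
    rw [neg_apply, neg_apply, map_neg, neg_neg, hK u]
  have h := paraProjPos_fderiv_paraProjPos (K := fun q => -K q) hneg hKd.fun_neg hY v
  simpa only [paraProjPos_neg, fderiv_fun_neg, neg_apply, smul_neg, ← sub_eq_add_neg] using h

theorem projectedDeriv_eq (hK : Function.Involutive (K p)) (hKd : DifferentiableAt 𝕜 K p)
    (hY : DifferentiableAt 𝕜 Y p) (v : E) :
    projectedDeriv K Y p v =
      fderiv 𝕜 Y p v + (1 / 2 : 𝕜) • K p (fderiv 𝕜 K p v (Y p)) := by
  set a := fderiv 𝕜 Y p v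
  set b := (1 / 2 : 𝕜) • fderiv 𝕜 K p v (Y p) with hb
  calc projectedDeriv K Y p v
      = paraProjPos (K p) (a + b) + paraProjNeg (K p) (a - b) :=
        congrArg₂ (· + ·) (paraProjPos_fderiv_paraProjPos hK hKd hY v)
          (paraProjNeg_fderiv_paraProjNeg hK hKd hY v)
    _ = (paraProjPos (K p) a + paraProjNeg (K p) a) +
          (paraProjPos (K p) b - paraProjNeg (K p) b) := by
        rw [map_add, map_sub]
        abel
    _ = a + K p b := by rw [paraProjPos_add_paraProjNeg, paraProjPos_sub_paraProjNeg]
    _ = a + (1 / 2 : 𝕜) • K p (fderiv 𝕜 K p v (Y p)) := by rw [hb, map_smul]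

theorem stmt17_general {η : LinearMap.BilinForm 𝕜 F} (hη : η.SeparatingLeft)
    (hK : Function.Involutive (K p)) (hanti : ∀ u w, η (K p u) (K p w) = -η u w)
    (hKd : DifferentiableAt 𝕜 K p) (hY : DifferentiableAt 𝕜 Y p) (v : E) :
    (∀ ξ, IsCanonicalDeriv η K Y p v ξ ↔
      ξ = fderiv 𝕜 Y p v + (1 / 2 : 𝕜) • K p (fderiv 𝕜 K p v (Y p))) ∧
    fderiv 𝕜 Y p v + (1 / 2 : 𝕜) • K p (fderiv 𝕜 K p v (Y p)) = projectedDeriv K Y p v :=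
  ⟨isCanonicalDeriv_iff hη hK hanti v, (projectedDeriv_eq hK hKd hY v).symm⟩

end CanonicalConnection

/-- The canonical connection of an almost para-Hermitian structure `(K, η)` on `ℝ²ⁿ`
with flat underlying metric (Levi-Civita connection = Fréchet derivative): there is a
unique vector `(∇ᶜ_v Y)(p)` satisfying the contorsion formula
`η(∇ᶜ_v Y, z) = η(DY_p v, z) − ½ η((DK_p v)(Y p), K_p z)`, and it is given by
`P₊(p)(D(P₊Y)_p v) + P₋(p)(D(P₋Y)_p v) = DY_p v + ½ K_p((DK_p v)(Y p))`. -/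
theorem stmt17 (n : ℕ)
    (η : LinearMap.BilinForm ℝ (Fin (2 * n) → ℝ))
    (hsymm : ∀ u v, η u v = η v u)
    (hnondeg : ∀ u, (∀ v, η u v = 0) → u = 0)
    (K : (Fin (2 * n) → ℝ) → ((Fin (2 * n) → ℝ) →L[ℝ] (Fin (2 * n) → ℝ)))
    (hK : ∀ q u, K q (K q u) = u)
    (hanti : ∀ q u v, η (K q u) (K q v) = - η u v)
    (Y : (Fin (2 * n) → ℝ) → (Fin (2 * n) → ℝ))
    (p : Fin (2 * n) → ℝ)
    (hKd : DifferentiableAt ℝ K p) (hY : DifferentiableAt ℝ Y p)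
    (v : Fin (2 * n) → ℝ) :
    let cand : Fin (2 * n) → ℝ :=
      fderiv ℝ Y p v + (1/2 : ℝ) • K p ((fderiv ℝ K p v) (Y p))
    -- `cand` satisfies the contorsion formula ...
    (∀ z, η cand z
        = η (fderiv ℝ Y p v) z - (1/2) * η ((fderiv ℝ K p v) (Y p)) (K p z)) ∧
    -- ... it is the unique such vector ...
    (∀ ξ : Fin (2 * n) → ℝ,
      (∀ z, η ξ z
        = η (fderiv ℝ Y p v) z - (1/2) * η ((fderiv ℝ K p v) (Y p)) (K p z)) → ξ = cand) ∧
    -- ... and it agrees with the projected formula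
    cand = (1/2 : ℝ) • ((fderiv ℝ (fun q => (1/2 : ℝ) • (Y q + K q (Y q))) p v)
            + K p (fderiv ℝ (fun q => (1/2 : ℝ) • (Y q + K q (Y q))) p v))
        + (1/2 : ℝ) • ((fderiv ℝ (fun q => (1/2 : ℝ) • (Y q - K q (Y q))) p v)
            - K p (fderiv ℝ (fun q => (1/2 : ℝ) • (Y q - K q (Y q))) p v)) := by
  obtain ⟨hiff, hproj⟩ := stmt17_general hnondeg (hK p) (hanti p) hKd hY v
  exact ⟨(hiff _).mpr rfl, fun ξ => (hiff ξ).mp, hproj⟩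
end
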